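/- arXiv:2209.11501 — 5 statements merged into one kernel-verified Lean document; each statement's English description precedes it below -/
import Mathlib

section
/- Let L ≥ 1 be an integer, ξ ≥ 0, and z ≥ 0. Then (1/(2^L Γ(L))) · ∫₀^z x^{L-1} e^{-x/2} · (Σ_{i=0}^∞ (ξ x/2)^i / ((L)_i · i!)) dx = Σ_{i=0}^∞ (ξ^i / i!) · γ(L+i, z/2)/Γ(L+i), where (L)_i = L(L+1)⋯(L+i−1) denotes the Pochhammer symbol (with (L)_0 = 1). -/
/-!
Since `(s)_i = Γ(s + i) / Γ(s)`, the series under the integral is `Γ(s)` times the regularized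
hypergeometric series `∑ t^i / (i! Γ(s + i))`, which converges for every `t`. On `(0, z]` its terms
at `t = ξ x / 2` are dominated by those at `x = z`, while the weight `x^{s-1} e^{-x/2}` is
integrable, so the series may be integrated term by term. The factor `x^i` raises the exponent of
the weight to `s + i - 1`, and rescaling `x` by `2` produces `γ(s + i, z / 2)`.
-/

/-- The lower incomplete gamma function `γ(s, x) = ∫₀^x t^{s-1} e^{-t} dt`. -/
noncomputable def lincGamma (s x : ℝ) : ℝ :=
  ∫ t in (0:ℝ)..x, t ^ (s - 1) * Real.exp (-t)

open MeasureTheory Real Set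
open scoped Interval Nat

theorem real_Gamma_add_nat_div_Gamma {s : ℝ} (hs : ∀ k : ℕ, s ≠ -k) (n : ℕ) :
    Gamma (s + n) / Gamma s = (ascPochhammer ℝ n).eval s := by
  have hs' : ∀ k : ℕ, (s : ℂ) ≠ -k := fun k => mod_cast hs k
  have hcast : (ascPochhammer ℂ n).eval (s : ℂ) = ((ascPochhammer ℝ n).eval s : ℝ) := by
    rw [← ascPochhammer_map Complex.ofRealHom]
    exact Polynomial.eval_map_apply Complex.ofRealHom s
  have h := Complex.Gamma_add_nat_div_Gamma_eq (n := n) s hs'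
  rw [hcast, ← Complex.ofReal_natCast, ← Complex.ofReal_add, Complex.Gamma_ofReal,
    Complex.Gamma_ofReal] at h
  exact_mod_cast h

theorem summable_pow_div_factorial_mul_Gamma (s t : ℝ) :
    Summable fun i : ℕ => t ^ i / (i ! * Gamma (s + i)) := by
  have hradius : (Complex.regularizedHGFunSeries 0 {(s : ℂ)}).radius = ⊤ :=
    Complex.radius_regularizedHGFunSeries_eq_top (by simp)
  have hsum := (Complex.regularizedHGFunSeries 0 {(s : ℂ)}).summable (x := (t : ℂ))
    (by simp [hradius])
  rw [← Complex.summable_ofReal]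
  refine hsum.congr fun i => ?_
  simp [Complex.regularizedHGFunSeries, Complex.regularizedHGFunCoeff, ← Complex.Gamma_ofReal,
    div_eq_mul_inv]

theorem hasSum_intervalIntegral_mul_of_norm_le {ι A : Type*} [Countable ι] [NormedRing A]
    [NormedSpace ℝ A] [CompleteSpace A] {μ : Measure ℝ} {a b : ℝ} {w : ℝ → A} {f : ι → ℝ → A}
    {B : ι → ℝ} (hw : IntervalIntegrable w μ a b)
    (hf : ∀ i, AEStronglyMeasurable (f i) (μ.restrict (Ι a b)))
    (hfB : ∀ i, ∀ x ∈ Ι a b, ‖f i x‖ ≤ B i) (hB : Summable B) :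
    HasSum (fun i => ∫ x in a..b, w x * f i x ∂μ) (∫ x in a..b, w x * ∑' i, f i x ∂μ) := by
  refine intervalIntegral.hasSum_integral_of_dominated_convergence (fun i x => ‖w x‖ * B i)
    (fun i => hw.def'.aestronglyMeasurable.mul (hf i)) (fun i => ae_of_all _ fun x hx => ?_)
    (ae_of_all _ fun x _ => hB.mul_left _) ?_ (ae_of_all _ fun x hx => ?_)
  · exact (norm_mul_le _ _).trans (by gcongr; exact hfB i x hx)
  · simpa only [tsum_mul_left] using hw.norm.mul_const _
  · exact (hB.of_norm_bounded fun i => hfB i x hx).hasSum.mul_left _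

theorem integral_rpow_mul_exp_neg_div (s : ℝ) {r z : ℝ} (hr : 0 < r) (hz : 0 ≤ z) :
    ∫ x in (0 : ℝ)..z, x ^ (s - 1) * exp (-x / r) = r ^ s * lincGamma s (z / r) := by
  have hscale : ∀ x ∈ uIcc 0 z,
      x ^ (s - 1) * exp (-x / r) = r ^ (s - 1) * ((x / r) ^ (s - 1) * exp (-(x / r))) := by
    intro x hx
    rw [uIcc_of_le hz] at hx
    rw [div_rpow hx.1 hr.le, ← neg_div]
    field_simp
  rw [intervalIntegral.integral_congr hscale, intervalIntegral.integral_const_mul,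
    intervalIntegral.integral_comp_div (fun t => t ^ (s - 1) * exp (-t)) hr.ne', zero_div,
    smul_eq_mul, ← mul_assoc, ← rpow_add_one hr.ne', sub_add_cancel, lincGamma]

theorem intervalIntegrable_rpow_mul_exp_neg_div {s : ℝ} (hs : 0 < s) (r a b : ℝ) :
    IntervalIntegrable (fun x => x ^ (s - 1) * exp (-x / r)) volume a b :=
  (intervalIntegral.intervalIntegrable_rpow' (by linarith)).mul_continuousOn (by fun_prop)

theorem integral_rpow_mul_exp_neg_div_mul_pow (s c : ℝ) {r z : ℝ} (hr : 0 < r) (hz : 0 ≤ z)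
    (i : ℕ) :
    ∫ x in (0 : ℝ)..z, x ^ (s - 1) * exp (-x / r) * (c * x / r) ^ i =
      r ^ s * (c ^ i * lincGamma (s + i) (z / r)) := by
  have habsorb : ∀ x ∈ uIoo 0 z, x ^ (s - 1) * exp (-x / r) * (c * x / r) ^ i =
      (c / r) ^ i * (x ^ (s + i - 1) * exp (-x / r)) := by
    intro x hx
    rw [uIoo_of_le hz] at hx
    rw [add_sub_right_comm, rpow_add_natCast hx.1.ne', mul_div_right_comm, mul_pow]
    ring
  rw [intervalIntegral.integral_congr_uIoo habsorb, intervalIntegral.integral_const_mul,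
    integral_rpow_mul_exp_neg_div _ hr hz, rpow_add_natCast hr.ne', div_pow]
  field_simp

theorem hasSum_integral_rpow_mul_exp_neg_div_mul_tsum {s r z : ℝ} (hs : 0 < s) (c : ℝ)
    (hr : 0 < r) (hz : 0 ≤ z) :
    HasSum (fun i : ℕ => r ^ s * (c ^ i / i ! * (lincGamma (s + i) (z / r) / Gamma (s + i))))
      (∫ x in (0 : ℝ)..z, x ^ (s - 1) * exp (-x / r) *
        ∑' i : ℕ, (c * x / r) ^ i / (i ! * Gamma (s + i))) := by
  have hbound : ∀ (i : ℕ), ∀ x ∈ Ι 0 z, ‖(c * x / r) ^ i / (i ! * Gamma (s + i))‖ ≤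
      ‖(c * z / r) ^ i / (i ! * Gamma (s + i))‖ := by
    intro i x hx
    rw [uIoc_of_le hz] at hx
    simp only [norm_div, norm_pow, norm_mul]
    gcongr
    exact abs_le_abs_of_nonneg hx.1.le hx.2
  have hswap := hasSum_intervalIntegral_mul_of_norm_le
    (intervalIntegrable_rpow_mul_exp_neg_div hs r 0 z)
    (fun i => Continuous.aestronglyMeasurable (by fun_prop)) hbound
    (summable_pow_div_factorial_mul_Gamma s (c * z / r)).norm
  refine hswap.congr_fun fun i => ?_
  simp only [← mul_div_assoc, intervalIntegral.integral_div,
    integral_rpow_mul_exp_neg_div_mul_pow s c hr hz]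
  ring

theorem tsum_pow_div_ascPochhammer_mul_factorial {s : ℝ} (hs : ∀ k : ℕ, s ≠ -k) (t : ℝ) :
    ∑' i : ℕ, t ^ i / ((ascPochhammer ℝ i).eval s * i !) =
      Gamma s * ∑' i : ℕ, t ^ i / (i ! * Gamma (s + i)) := by
  rw [← tsum_mul_left]
  refine tsum_congr fun i => ?_
  rw [← real_Gamma_add_nat_div_Gamma hs, div_mul_eq_mul_div, div_div_eq_mul_div]
  ring

theorem noncentral_chi_sq_integral_general {s : ℝ} (hs : 0 < s) (ξ : ℝ) {z : ℝ} (hz : 0 ≤ z) :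
    HasSum (fun i : ℕ => ξ ^ i / i ! * (lincGamma (s + i) (z / 2) / Gamma (s + i)))
      (1 / (2 ^ s * Gamma s) * ∫ x in (0 : ℝ)..z, x ^ (s - 1) * exp (-x / 2) *
        ∑' i : ℕ, (ξ * x / 2) ^ i / ((ascPochhammer ℝ i).eval s * i !)) := by
  have hΓ : Gamma s ≠ 0 := (Gamma_pos_of_pos hs).ne'
  have hpole (k : ℕ) : s ≠ -k := by linarith [k.cast_nonneg (α := ℝ)]
  have hpow : (2 : ℝ) ^ s ≠ 0 := (rpow_pos_of_pos two_pos s).ne'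
  have hcancel (I : ℝ) : 2 ^ s * (1 / (2 ^ s * Gamma s) * (Gamma s * I)) = I := by field_simp
  simp only [tsum_pow_div_ascPochhammer_mul_factorial hpole, mul_left_comm _ (Gamma s) (tsum _),
    intervalIntegral.integral_const_mul]
  rw [← hasSum_mul_left_iff hpow, hcancel]
  exact hasSum_integral_rpow_mul_exp_neg_div_mul_tsum hs ξ two_pos hz

/-- The key integration step in the Appendix proof of Theorem 2: integrating the
non-central χ² density with `2L` degrees of freedom term by term gives the CDF series.
Here `(L)_i` is the Pochhammer symbol `L(L+1)⋯(L+i−1)`. -/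
theorem noncentral_chi_sq_integral (L : ℕ) (hL : 1 ≤ L) (ξ : ℝ) (hξ : 0 ≤ ξ)
    (z : ℝ) (hz : 0 ≤ z) :
    (1 / (2 ^ L * Real.Gamma L)) *
        ∫ x in (0:ℝ)..z, x ^ ((L : ℝ) - 1) * Real.exp (-x / 2) *
          ∑' i : ℕ, (ξ * x / 2) ^ i / ((ascPochhammer ℝ i).eval (L : ℝ) * Nat.factorial i)
      = ∑' i : ℕ, ξ ^ i / (Nat.factorial i) * (lincGamma (L + i) (z / 2) / Real.Gamma (L + i)) := by
  have hL' : (0 : ℝ) < L := by exact_mod_cast hL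
  simpa only [rpow_natCast] using (noncentral_chi_sq_integral_general hL' ξ hz).tsum_eq.symm
end

section
/- Let a ≥ 0, b > 0, and let L ≥ 1 be an integer. Define F(t) = e^{-a} · Σ_{i=0}^∞ (a^i/i!) · γ(1+i, t/b)/Γ(1+i) for t ≥ 0. Then lim_{ψ → 0⁺} ψ^{-L} · (F(ψ))^L = e^{-La}/b^L. -/
open Filter

/-!
The outage probability `F` vanishes at `0`, so `F ψ / ψ` tends to `F'(0)`. The series may be
differentiated term by term, the derivatives `a ^ i / i! * (v ^ i / i! * e ^ (-v))` being dominated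
on bounded sets by an exponential series; at `v = 0` only the term `i = 0` survives.
-/

open scoped Nat Topology

lemma lincGamma_zero_right (s : ℝ) : lincGamma s 0 = 0 :=
  intervalIntegral.integral_same

lemma hasDerivAt_lincGamma {s : ℝ} (hs : 1 ≤ s) (x : ℝ) :
    HasDerivAt (lincGamma s) (x ^ (s - 1) * Real.exp (-x)) x := by
  have hcont : Continuous fun t : ℝ => t ^ (s - 1) * Real.exp (-t) :=
    (Real.continuous_rpow_const (sub_nonneg.2 hs)).mul (by fun_prop)
  exact hcont.integral_hasStrictDerivAt 0 x |>.hasDerivAt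

lemma hasDerivAt_lincGamma_div_Gamma (i : ℕ) (v : ℝ) :
    HasDerivAt (fun v => lincGamma (1 + i) v / Real.Gamma (1 + i))
      (v ^ i / i ! * Real.exp (-v)) v := by
  have hs : (1 : ℝ) ≤ 1 + i := le_add_of_nonneg_right i.cast_nonneg
  have hGamma : Real.Gamma (1 + i) = i ! := by rw [add_comm, Real.Gamma_nat_eq_factorial]
  refine ((hasDerivAt_lincGamma hs v).div_const (Real.Gamma (1 + i))).congr_deriv ?_
  rw [hGamma, add_sub_cancel_left, Real.rpow_natCast, mul_div_right_comm]

lemma abs_pow_div_factorial_mul_le (a : ℝ) {R v : ℝ} (hv : |v| ≤ R) (i : ℕ) :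
    |a ^ i / i ! * (v ^ i / i ! * Real.exp (-v))| ≤ (|a| * R) ^ i / i ! * Real.exp R := by
  have hR : 0 ≤ R := (abs_nonneg v).trans hv
  have hpow : |v ^ i / i !| ≤ R ^ i := by
    rw [abs_div, abs_pow, Nat.abs_cast]
    exact (div_le_self (by positivity) (mod_cast i.factorial_pos)).trans (by gcongr)
  have hexp : Real.exp (-v) ≤ Real.exp R := Real.exp_le_exp.2 (neg_le.1 (abs_le.1 hv).1)
  calc |a ^ i / i ! * (v ^ i / i ! * Real.exp (-v))|
      = |a| ^ i / i ! * (|v ^ i / i !| * Real.exp (-v)) := by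
        rw [abs_mul, abs_mul, abs_div (a ^ i), abs_pow, Nat.abs_cast, Real.abs_exp]
    _ ≤ |a| ^ i / i ! * (R ^ i * Real.exp R) := by gcongr
    _ = (|a| * R) ^ i / i ! * Real.exp R := by ring

/-- For `a, v ≥ 0`, the distribution function at `v` of the mixture of the Erlang distributions of
shape `1 + i` and rate `1` with Poisson weights `e ^ (-a) * a ^ i / i!`; the same series serves as
definition for all real `a` and `v`. The per-round outage probability with threshold `ψ` is
`poissonErlangCDF a (ψ / b)`. -/
noncomputable def poissonErlangCDF (a v : ℝ) : ℝ :=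
  Real.exp (-a) * ∑' i : ℕ, a ^ i / i ! * (lincGamma (1 + i) v / Real.Gamma (1 + i))

lemma poissonErlangCDF_zero_right (a : ℝ) : poissonErlangCDF a 0 = 0 := by
  simp only [poissonErlangCDF, lincGamma_zero_right, zero_div, mul_zero, tsum_zero]

lemma hasDerivAt_poissonErlangCDF (a v : ℝ) :
    HasDerivAt (poissonErlangCDF a)
      (Real.exp (-a) * ∑' i : ℕ, a ^ i / i ! * (v ^ i / i ! * Real.exp (-v))) v := by
  set R := |v| + 1
  have hbound : Summable fun i : ℕ => (|a| * R) ^ i / i ! * Real.exp R :=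
    (Real.summable_pow_div_factorial _).mul_right _
  have hsummable :
      Summable fun i : ℕ => a ^ i / i ! * (lincGamma (1 + i) 0 / Real.Gamma (1 + i)) := by
    simp only [lincGamma_zero_right, zero_div, mul_zero, summable_zero]
  refine (hasDerivAt_tsum_of_isPreconnected hbound Metric.isOpen_ball
    (convex_ball (0 : ℝ) R).isPreconnected
    (fun i y _ => (hasDerivAt_lincGamma_div_Gamma i y).const_mul _)
    (fun i y hy => abs_pow_div_factorial_mul_le a (mem_ball_zero_iff.1 hy).le i)
    (Metric.mem_ball_self (by positivity)) hsummable ?_).const_mul _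
  exact mem_ball_zero_iff.2 (lt_add_one |v|)

lemma hasDerivAt_poissonErlangCDF_zero (a : ℝ) :
    HasDerivAt (poissonErlangCDF a) (Real.exp (-a)) 0 := by
  refine (hasDerivAt_poissonErlangCDF a 0).congr_deriv ?_
  rw [tsum_eq_single 0 fun i hi => by simp [hi]]
  simp

lemma tendsto_zpow_neg_mul_pow_of_hasDerivAt_zero {𝕜 : Type*} [NontriviallyNormedField 𝕜]
    {f : 𝕜 → 𝕜} {f' : 𝕜} (hf : HasDerivAt f f' 0) (hf₀ : f 0 = 0) (n : ℕ) :
    Tendsto (fun x => x ^ (-(n : ℤ)) * f x ^ n) (𝓝[≠] 0) (𝓝 (f' ^ n)) := by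
  simpa [hf₀, mul_pow] using hf.tendsto_slope_zero.pow n

theorem typeI_asymptotic_outage_general (a : ℝ) {b : ℝ} (hb : b ≠ 0) (L : ℕ) :
    Tendsto (fun ψ : ℝ => ψ ^ (-(L : ℤ)) * poissonErlangCDF a (ψ / b) ^ L)
      (𝓝[≠] 0) (𝓝 (Real.exp (-(L * a)) / b ^ L)) := by
  have hscale : Tendsto (fun ψ : ℝ => ψ / b) (𝓝[≠] 0) (𝓝[≠] 0) := by
    simpa using ((hasDerivAt_id (0 : ℝ)).div_const b).tendsto_nhdsNE (by simpa)
  have hlim := ((tendsto_zpow_neg_mul_pow_of_hasDerivAt_zero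
    (hasDerivAt_poissonErlangCDF_zero a) (poissonErlangCDF_zero_right a) L).comp hscale).div_const
      (b ^ L)
  rw [← Real.exp_nat_mul, mul_neg] at hlim
  refine hlim.congr fun ψ => ?_
  simp only [Function.comp_apply, zpow_neg, zpow_natCast, div_pow, inv_div]
  field_simp

/-- Asymptotic outage probability of Type-I HARQ: with per-round outage probability
`F(ψ) = e^{-a} ∑_{i=0}^∞ (a^i/i!) γ(1+i, ψ/b)/Γ(1+i)`, one has
`ψ^{-L} (F(ψ))^L → e^{-La}/b^L` as `ψ → 0⁺`. -/
theorem typeI_asymptotic_outage (a b : ℝ) (ha : 0 ≤ a) (hb : 0 < b)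
    (L : ℕ) (hL : 1 ≤ L)
    (F : ℝ → ℝ)
    (hF : ∀ t, 0 ≤ t → F t = Real.exp (-a) *
      ∑' i : ℕ, a ^ i / (Nat.factorial i) * (lincGamma (1 + i) (t / b) / Real.Gamma (1 + i))) :
    Tendsto (fun ψ : ℝ => ψ ^ (-(L : ℤ)) * (F ψ) ^ L)
      (nhdsWithin 0 (Set.Ioi 0)) (nhds (Real.exp (-(L * a)) / b ^ L)) := by
  refine ((typeI_asymptotic_outage_general a hb.ne' L).mono_left (nhdsGT_le_nhdsNE 0)).congr' ?_
  filter_upwards [self_mem_nhdsWithin] with ψ hψ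
  rw [hF ψ (Set.mem_Ioi.1 hψ).le, poissonErlangCDF]
end

section
/- Let ξ ≥ 0, b > 0, and let L ≥ 1 be an integer. Define F_G(t) = e^{-ξ} · Σ_{i=0}^∞ (ξ^i/i!) · γ(L+i, t/b)/Γ(L+i) for t ≥ 0. Then lim_{ψ → 0⁺} ψ^{-L} · F_G(ψ) = e^{-ξ}/(b^L · L!). -/
/-!
As `x → 0⁺`, the factor `e^{-t}` is squeezed between `e^{-x}` and `1` on `[0, x]`, so
`γ(s, x) / Γ(s) ~ x ^ s / Γ(s + 1)`. After division by `x ^ s`, the `i`-th term of a series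
`∑ wᵢ γ(s + i, x) / Γ(s + i)` is therefore of order `x ^ i`, and only the term `i = 0` survives in
the limit. For `x ≤ 1` the terms are dominated by `|wᵢ| / Γ(s + 1)`, which allows the limit to be
taken term by term.
-/

open Filter

open scoped Topology

section IncompleteGamma

variable {s x : ℝ}

lemma intervalIntegrable_rpow_sub_one_mul_exp_neg (hs : 0 < s) (x : ℝ) :
    IntervalIntegrable (fun t : ℝ => t ^ (s - 1) * Real.exp (-t)) MeasureTheory.volume 0 x :=
  (intervalIntegral.intervalIntegrable_rpow' (by linarith)).mul_continuousOn (by fun_prop)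

lemma integral_rpow_sub_one (hs : 0 < s) (x : ℝ) :
    ∫ t in (0 : ℝ)..x, t ^ (s - 1) = x ^ s / s := by
  rw [integral_rpow (.inl (by linarith)), sub_add_cancel, Real.zero_rpow hs.ne', sub_zero]

lemma lincGamma_nonneg (s : ℝ) (hx : 0 ≤ x) : 0 ≤ lincGamma s x :=
  intervalIntegral.integral_nonneg hx fun _ ht =>
    mul_nonneg (Real.rpow_nonneg ht.1 _) (Real.exp_nonneg _)

lemma lincGamma_le_rpow_div (hs : 0 < s) (hx : 0 ≤ x) : lincGamma s x ≤ x ^ s / s := by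
  rw [← integral_rpow_sub_one hs]
  refine intervalIntegral.integral_mono_on hx (intervalIntegrable_rpow_sub_one_mul_exp_neg hs x)
    (intervalIntegral.intervalIntegrable_rpow' (by linarith)) fun t ht => ?_
  exact mul_le_of_le_one_right (Real.rpow_nonneg ht.1 _)
    (Real.exp_le_one_iff.2 (neg_nonpos.2 ht.1))

lemma rpow_div_mul_exp_neg_le_lincGamma (hs : 0 < s) (hx : 0 ≤ x) :
    x ^ s / s * Real.exp (-x) ≤ lincGamma s x := by
  rw [← integral_rpow_sub_one hs, ← intervalIntegral.integral_mul_const]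
  refine intervalIntegral.integral_mono_on hx
    ((intervalIntegral.intervalIntegrable_rpow' (by linarith)).mul_const _)
    (intervalIntegrable_rpow_sub_one_mul_exp_neg hs x) fun t ht => ?_
  exact mul_le_mul_of_nonneg_left (Real.exp_le_exp.2 (neg_le_neg ht.2)) (Real.rpow_nonneg ht.1 _)

lemma tendsto_lincGamma_div_rpow (hs : 0 < s) :
    Tendsto (fun x => lincGamma s x / x ^ s) (𝓝[>] 0) (𝓝 s⁻¹) := by
  have lower_limit : Tendsto (fun x : ℝ => s⁻¹ * Real.exp (-x)) (𝓝[>] 0) (𝓝 s⁻¹) := by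
    have hcont : Continuous fun x : ℝ => s⁻¹ * Real.exp (-x) := by fun_prop
    simpa using (hcont.tendsto 0).mono_left nhdsWithin_le_nhds
  refine tendsto_of_tendsto_of_tendsto_of_le_of_le' lower_limit tendsto_const_nhds ?_ ?_
  all_goals
    filter_upwards [self_mem_nhdsWithin] with x (hx : 0 < x)
    have hxs : 0 < x ^ s := Real.rpow_pos_of_pos hx s
  · rw [le_div_iff₀ hxs]
    calc s⁻¹ * Real.exp (-x) * x ^ s = x ^ s / s * Real.exp (-x) := by ring
      _ ≤ lincGamma s x := rpow_div_mul_exp_neg_le_lincGamma hs hx.le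
  · rw [div_le_iff₀ hxs]
    exact (lincGamma_le_rpow_div hs hx.le).trans_eq (div_eq_inv_mul _ _)

/-- The regularized lower incomplete gamma function `P(s, x) = γ(s, x) / Γ(s)`, that is, the
cumulative distribution function of the gamma law with shape `s` and rate `1`. It is meaningful for
`0 < s` and `0 ≤ x`. -/
noncomputable def regularizedLincGamma (s x : ℝ) : ℝ :=
  lincGamma s x / Real.Gamma s

lemma regularizedLincGamma_nonneg (hs : 0 < s) (hx : 0 ≤ x) : 0 ≤ regularizedLincGamma s x :=
  div_nonneg (lincGamma_nonneg s hx) (Real.Gamma_pos_of_pos hs).le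

lemma regularizedLincGamma_le (hs : 0 < s) (hx : 0 ≤ x) :
    regularizedLincGamma s x ≤ x ^ s / Real.Gamma (s + 1) := by
  rw [Real.Gamma_add_one hs.ne', ← div_div]
  exact div_le_div_of_nonneg_right (lincGamma_le_rpow_div hs hx) (Real.Gamma_pos_of_pos hs).le

lemma tendsto_regularizedLincGamma_div_rpow (hs : 0 < s) :
    Tendsto (fun x => regularizedLincGamma s x / x ^ s) (𝓝[>] 0) (𝓝 (Real.Gamma (s + 1))⁻¹) := by
  convert (tendsto_lincGamma_div_rpow hs).div_const (Real.Gamma s) using 2 with x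
  · exact div_right_comm _ _ _
  · rw [Real.Gamma_add_one hs.ne', mul_inv, div_eq_mul_inv]

end IncompleteGamma

lemma Gamma_le_Gamma_add_natCast {y : ℝ} (hy : 1 ≤ y) (n : ℕ) :
    Real.Gamma y ≤ Real.Gamma (y + n) := by
  induction n with
  | zero => simp
  | succ n ih =>
    have hyn : 1 ≤ y + n := le_add_of_le_of_nonneg hy n.cast_nonneg
    calc Real.Gamma y ≤ Real.Gamma (y + n) := ih
      _ ≤ (y + n) * Real.Gamma (y + n) :=
        le_mul_of_one_le_left (Real.Gamma_pos_of_pos (by linarith)).le hyn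
      _ = Real.Gamma (y + (n + 1 : ℕ)) := by
        rw [← Real.Gamma_add_one (by linarith), Nat.cast_add_one, add_assoc]

section Mixture

variable {s : ℝ}

lemma tendsto_regularizedLincGamma_add_natCast_div_rpow (hs : 0 < s) (i : ℕ) :
    Tendsto (fun x => regularizedLincGamma (s + i) x / x ^ s) (𝓝[>] 0)
      (𝓝 (0 ^ i * (Real.Gamma (s + i + 1))⁻¹)) := by
  have pow_limit : Tendsto (fun x : ℝ => x ^ i) (𝓝[>] 0) (𝓝 (0 ^ i)) :=
    ((continuous_pow i).tendsto 0).mono_left nhdsWithin_le_nhds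
  refine (pow_limit.mul (tendsto_regularizedLincGamma_div_rpow (by positivity))).congr' ?_
  filter_upwards [self_mem_nhdsWithin] with x (hx : 0 < x)
  rw [Real.rpow_add_natCast hx.ne']
  field_simp

lemma regularizedLincGamma_add_natCast_div_rpow_le (hs : 0 < s) (i : ℕ) {x : ℝ} (hx : 0 < x)
    (hx1 : x ≤ 1) :
    regularizedLincGamma (s + i) x / x ^ s ≤ (Real.Gamma (s + 1))⁻¹ := by
  have hxs : 0 < x ^ s := Real.rpow_pos_of_pos hx s
  have hΓ : 0 < Real.Gamma (s + 1) := Real.Gamma_pos_of_pos (by linarith)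
  have hΓ_le : Real.Gamma (s + 1) ≤ Real.Gamma (s + i + 1) := by
    rw [add_right_comm]
    exact Gamma_le_Gamma_add_natCast (by linarith) i
  rw [div_le_iff₀ hxs]
  calc regularizedLincGamma (s + i) x ≤ x ^ (s + i) / Real.Gamma (s + i + 1) :=
        regularizedLincGamma_le (by positivity) hx.le
    _ ≤ x ^ s / Real.Gamma (s + 1) :=
        div_le_div₀ hxs.le
          (Real.rpow_le_rpow_of_exponent_ge hx hx1 (le_add_of_nonneg_right i.cast_nonneg)) hΓ hΓ_le
    _ = (Real.Gamma (s + 1))⁻¹ * x ^ s := div_eq_inv_mul _ _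

theorem tendsto_tsum_mul_regularizedLincGamma_div_rpow (hs : 0 < s) {w : ℕ → ℝ}
    (hw : Summable w) :
    Tendsto (fun x => (∑' i : ℕ, w i * regularizedLincGamma (s + i) x) / x ^ s) (𝓝[>] 0)
      (𝓝 (w 0 / Real.Gamma (s + 1))) := by
  have limit_eq : ∑' i : ℕ, w i * (0 ^ i * (Real.Gamma (s + i + 1))⁻¹) =
      w 0 / Real.Gamma (s + 1) := by
    rw [tsum_eq_single 0 fun i hi => by simp [hi]]
    simp [div_eq_mul_inv]
  simp_rw [← limit_eq, ← tsum_div_const, mul_div_assoc]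
  refine tendsto_tsum_of_dominated_convergence (hw.abs.mul_right (Real.Gamma (s + 1))⁻¹)
    (fun i => (tendsto_regularizedLincGamma_add_natCast_div_rpow hs i).const_mul (w i)) ?_
  filter_upwards [Ioc_mem_nhdsGT one_pos] with x ⟨hx, hx1⟩ i
  have term_nonneg : 0 ≤ regularizedLincGamma (s + i) x / x ^ s :=
    div_nonneg (regularizedLincGamma_nonneg (by positivity) hx.le) (Real.rpow_nonneg hx.le s)
  rw [Real.norm_eq_abs, abs_mul, abs_of_nonneg term_nonneg]
  exact mul_le_mul_of_nonneg_left (regularizedLincGamma_add_natCast_div_rpow_le hs i hx hx1)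
    (abs_nonneg _)

end Mixture

theorem harqCC_asymptotic_outage_general (ξ : ℝ) {b s : ℝ} (hb : 0 < b) (hs : 0 < s) (F : ℝ → ℝ)
    (hF : ∀ t, 0 < t → F t = Real.exp (-ξ) *
      ∑' i : ℕ, ξ ^ i / (Nat.factorial i) * (lincGamma (s + i) (t / b) / Real.Gamma (s + i))) :
    Tendsto (fun ψ : ℝ => ψ ^ (-s) * F ψ) (𝓝[>] 0)
      (𝓝 (Real.exp (-ξ) / (b ^ s * Real.Gamma (s + 1)))) := by
  have rescale : Tendsto (fun ψ : ℝ => ψ / b) (𝓝[>] 0) (𝓝[>] 0) := by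
    refine tendsto_nhdsWithin_iff.2 ⟨?_, ?_⟩
    · simpa using ((continuous_id.div_const b).tendsto 0).mono_left nhdsWithin_le_nhds
    · filter_upwards [self_mem_nhdsWithin] with ψ hψ using div_pos hψ hb
  have mixture_limit := ((tendsto_tsum_mul_regularizedLincGamma_div_rpow hs
    (Real.summable_pow_div_factorial ξ)).comp rescale).const_mul (Real.exp (-ξ) / b ^ s)
  convert mixture_limit.congr' ?_ using 2
  · simp [div_eq_mul_inv, mul_assoc, mul_comm, mul_left_comm]
  filter_upwards [self_mem_nhdsWithin] with ψ (hψ : 0 < ψ)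
  have hbs : b ^ s ≠ 0 := (Real.rpow_pos_of_pos hb s).ne'
  simp only [Function.comp_apply, regularizedLincGamma]
  rw [hF ψ hψ, Real.div_rpow hψ.le hb.le, Real.rpow_neg hψ.le]
  field_simp

/-- Asymptotic outage probability of HARQ-CC: with outage probability
`F_G(ψ) = e^{-ξ} ∑_{i=0}^∞ (ξ^i/i!) γ(L+i, ψ/b)/Γ(L+i)`, one has
`ψ^{-L} F_G(ψ) → e^{-ξ}/(b^L L!)` as `ψ → 0⁺`. -/
theorem harqCC_asymptotic_outage (ξ b : ℝ) (hξ : 0 ≤ ξ) (hb : 0 < b)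
    (L : ℕ) (hL : 1 ≤ L)
    (F : ℝ → ℝ)
    (hF : ∀ t, 0 ≤ t → F t = Real.exp (-ξ) *
      ∑' i : ℕ, ξ ^ i / (Nat.factorial i) * (lincGamma (L + i) (t / b) / Real.Gamma (L + i))) :
    Tendsto (fun ψ : ℝ => ψ ^ (-(L : ℤ)) * F ψ)
      (nhdsWithin 0 (Set.Ioi 0)) (nhds (Real.exp (-ξ) / (b ^ L * Nat.factorial L))) := by
  simpa [Real.Gamma_nat_eq_factorial, ← Real.rpow_intCast] using
    harqCC_asymptotic_outage_general ξ hb (Nat.cast_pos.2 hL) F fun t ht => hF t ht.le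
end

section
/- Let L ≥ 1 be an integer and c > 0. Then the function ξ ↦ e^{-ξ} · Σ_{i=0}^∞ (ξ^i/i!) · γ(L+i, c)/Γ(L+i) is strictly decreasing on [0, ∞). -/
/-!
The series is the mean of `P(L + N, c)` for a Poisson variable `N` of parameter `ξ`, where
`P(s, c) = γ(s, c) / Γ(s)`. Differentiating a Poisson mean in its parameter gives the mean of the
forward difference of the sequence, so the mean of a non-constant decreasing sequence is strictly
decreasing. Integration by parts gives `P(s + 1, c) - P(s, c) = -c ^ s e ^ (-c) / Γ(s + 1) < 0`.
-/

open Set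
open scoped Nat

section ExponentialSeries

variable {𝕜 E : Type*} [RCLike 𝕜] [NormedAddCommGroup E] [NormedSpace 𝕜 E]

theorem norm_pow_div_factorial_smul_le {v : E} {C R : ℝ} {x : 𝕜} (hv : ‖v‖ ≤ C) (hx : ‖x‖ ≤ R)
    (n : ℕ) : ‖(x ^ n / n ! : 𝕜) • v‖ ≤ R ^ n / n ! * C := by
  have hR : 0 ≤ R := (norm_nonneg x).trans hx
  rw [norm_smul, norm_div, norm_pow, RCLike.norm_natCast]
  gcongr

theorem hasDerivAt_pow_succ_div_factorial (n : ℕ) (x : 𝕜) :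
    HasDerivAt (fun y : 𝕜 => y ^ (n + 1) / (n + 1)!) (x ^ n / n !) x := by
  have hn : ((n + 1 : ℕ) : 𝕜) ≠ 0 := Nat.cast_ne_zero.2 n.succ_ne_zero
  refine ((hasDerivAt_pow (n + 1) x).div_const _).congr_deriv ?_
  rw [Nat.factorial_succ, Nat.cast_mul, Nat.add_sub_cancel, mul_div_mul_left _ _ hn]

variable [CompleteSpace E] {a : ℕ → E} {C : ℝ}

theorem summable_pow_div_factorial_smul (ha : ∀ n, ‖a n‖ ≤ C) (x : 𝕜) :
    Summable fun n : ℕ => (x ^ n / n ! : 𝕜) • a n :=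
  .of_norm_bounded ((Real.summable_pow_div_factorial ‖x‖).mul_right C) fun n =>
    norm_pow_div_factorial_smul_le (ha n) le_rfl n

theorem hasDerivAt_tsum_pow_div_factorial_smul (ha : ∀ n, ‖a n‖ ≤ C) (x : 𝕜) :
    HasDerivAt (fun y : 𝕜 => ∑' n : ℕ, (y ^ n / n ! : 𝕜) • a n)
      (∑' n : ℕ, (x ^ n / n ! : 𝕜) • a (n + 1)) x := by
  have hx : x ∈ Metric.ball (0 : 𝕜) (‖x‖ + 1) := by simp
  have htail : HasDerivAt (fun y : 𝕜 => ∑' n : ℕ, (y ^ (n + 1) / (n + 1)! : 𝕜) • a (n + 1))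
      (∑' n : ℕ, (x ^ n / n ! : 𝕜) • a (n + 1)) x :=
    hasDerivAt_tsum_of_isPreconnected
      ((Real.summable_pow_div_factorial (‖x‖ + 1)).mul_right C) Metric.isOpen_ball
      (convex_ball (0 : 𝕜) _).isPreconnected
      (fun n y _ => (hasDerivAt_pow_succ_div_factorial n y).smul_const (a (n + 1)))
      (fun n y hy =>
        norm_pow_div_factorial_smul_le (ha (n + 1)) (mem_ball_zero_iff.1 hy).le n)
      hx ((summable_nat_add_iff 1).2 (summable_pow_div_factorial_smul ha x)) hx
  have hsplit (y : 𝕜) : ∑' n : ℕ, (y ^ n / n ! : 𝕜) • a n =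
      a 0 + ∑' n : ℕ, (y ^ (n + 1) / (n + 1)! : 𝕜) • a (n + 1) := by
    rw [(summable_pow_div_factorial_smul ha y).tsum_eq_zero_add]
    simp
  simpa only [hsplit] using htail.const_add (a 0)

end ExponentialSeries

section PoissonMean

/-- The mean of `a N` for a Poisson random variable `N` of parameter `x`, as a series. It is defined
for every real `x`, so that it can be differentiated at `0` too. -/
noncomputable def poissonMean (a : ℕ → ℝ) (x : ℝ) : ℝ :=
  Real.exp (-x) * ∑' n : ℕ, x ^ n / n ! * a n

variable {a b : ℕ → ℝ} {A B x : ℝ}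

theorem hasDerivAt_poissonMean (ha : ∀ n, ‖a n‖ ≤ A) (x : ℝ) :
    HasDerivAt (poissonMean a) (poissonMean (fun n => a (n + 1)) x - poissonMean a x) x := by
  have hseries := hasDerivAt_tsum_pow_div_factorial_smul ha x
  simp only [smul_eq_mul] at hseries
  refine ((hasDerivAt_neg x).exp.mul hseries).congr_deriv ?_
  simp only [poissonMean]
  ring

theorem poissonMean_lt_poissonMean (ha : ∀ n, ‖a n‖ ≤ A) (hb : ∀ n, ‖b n‖ ≤ B) (hab : a ≤ b)
    {k : ℕ} (hk : a k < b k) (hx : 0 < x) : poissonMean a x < poissonMean b x := by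
  refine mul_lt_mul_of_pos_left ?_ (Real.exp_pos _)
  refine Summable.tsum_lt_tsum (i := k) (fun n => ?_) ?_
    (summable_pow_div_factorial_smul ha x) (summable_pow_div_factorial_smul hb x)
  · exact mul_le_mul_of_nonneg_left (hab n) (by positivity)
  · exact mul_lt_mul_of_pos_left hk (by positivity)

theorem strictAntiOn_poissonMean (ha : Antitone a) (hbdd : BddBelow (range a)) {k : ℕ}
    (hk : a (k + 1) < a k) : StrictAntiOn (poissonMean a) (Ici 0) := by
  have hbddAbove : BddAbove (range a) := ⟨a 0, forall_mem_range.2 fun n => ha n.zero_le⟩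
  obtain ⟨A, hA⟩ : ∃ A, ∀ n, ‖a n‖ ≤ A :=
    (hbdd.isBounded hbddAbove).exists_norm_le.imp fun _ => forall_mem_range.1
  refine strictAntiOn_of_deriv_neg (convex_Ici 0)
    (fun x _ => (hasDerivAt_poissonMean hA x).continuousAt.continuousWithinAt) fun x hx => ?_
  rw [interior_Ici, mem_Ioi] at hx
  rw [(hasDerivAt_poissonMean hA x).deriv, sub_neg]
  exact poissonMean_lt_poissonMean (fun n => hA (n + 1)) hA (fun n => ha n.le_succ) hk hx

end PoissonMean

section IncompleteGamma

/-- The regularized lower incomplete gamma function `P(s, c) = γ(s, c) / Γ(s)`. -/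
noncomputable def regLincGamma (s c : ℝ) : ℝ :=
  lincGamma s c / Real.Gamma s

variable {s c : ℝ}

theorem lincGamma_nonneg_s10 (s : ℝ) (hc : 0 ≤ c) : 0 ≤ lincGamma s c :=
  intervalIntegral.integral_nonneg hc fun _ ht =>
    mul_nonneg (Real.rpow_nonneg ht.1 _) (Real.exp_pos _).le

theorem lincGamma_add_one (hs : 0 < s) (c : ℝ) :
    lincGamma (s + 1) c = s * lincGamma s c - c ^ s * Real.exp (-c) := by
  have hrpow : ∀ t ∈ Ioo (min 0 c) (max 0 c),
      HasDerivWithinAt (fun t : ℝ => t ^ s) (s * t ^ (s - 1)) (Ioi t) t := fun t ht => by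
    have ht0 : t ≠ 0 := by
      rintro rfl
      rcases le_total 0 c with h | h <;> simp [h] at ht
    exact (Real.hasDerivAt_rpow_const (Or.inl ht0)).hasDerivWithinAt
  have hexp (t : ℝ) : HasDerivAt (fun t : ℝ => -Real.exp (-t)) (Real.exp (-t)) t :=
    (hasDerivAt_neg t).exp.neg.congr_deriv (by ring)
  have hparts := intervalIntegral.integral_mul_deriv_eq_deriv_mul_of_hasDeriv_right
    (Real.continuous_rpow_const hs.le).continuousOn (by fun_prop) hrpow
    (fun t _ => (hexp t).hasDerivWithinAt)
    ((intervalIntegral.intervalIntegrable_rpow' (by linarith)).const_mul s)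
    (Continuous.intervalIntegrable (by fun_prop) 0 c)
  simp only [Real.zero_rpow hs.ne', mul_assoc, mul_neg, intervalIntegral.integral_neg,
    intervalIntegral.integral_const_mul] at hparts
  rw [lincGamma, lincGamma, add_sub_cancel_right, hparts]
  ring

theorem regLincGamma_nonneg (hs : 0 ≤ s) (hc : 0 ≤ c) : 0 ≤ regLincGamma s c :=
  div_nonneg (lincGamma_nonneg_s10 s hc) (Real.Gamma_nonneg_of_nonneg hs)

theorem regLincGamma_add_one (hs : 0 < s) (c : ℝ) :
    regLincGamma (s + 1) c = regLincGamma s c - c ^ s * Real.exp (-c) / Real.Gamma (s + 1) := by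
  rw [regLincGamma, regLincGamma, lincGamma_add_one hs, sub_div, Real.Gamma_add_one hs.ne',
    mul_div_mul_left _ _ hs.ne']

theorem regLincGamma_add_one_lt (hs : 0 < s) (hc : 0 < c) :
    regLincGamma (s + 1) c < regLincGamma s c := by
  rw [regLincGamma_add_one hs]
  exact sub_lt_self _ (by positivity)

theorem strictAnti_regLincGamma_add_natCast (hs : 0 < s) (hc : 0 < c) :
    StrictAnti fun n : ℕ => regLincGamma (s + n) c :=
  strictAnti_nat_of_succ_lt fun n => by
    rw [Nat.cast_succ, ← add_assoc]
    exact regLincGamma_add_one_lt (by positivity) hc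

end IncompleteGamma

theorem outage_strictAntiOn_general {s c : ℝ} (hs : 0 < s) (hc : 0 < c) :
    StrictAntiOn
      (fun ξ : ℝ => Real.exp (-ξ) *
        ∑' i : ℕ, ξ ^ i / (Nat.factorial i) * (lincGamma (s + i) c / Real.Gamma (s + i)))
      (Set.Ici 0) := by
  have hanti := strictAnti_regLincGamma_add_natCast hs hc
  have hbdd : BddBelow (range fun n : ℕ => regLincGamma (s + n) c) :=
    ⟨0, forall_mem_range.2 fun n => regLincGamma_nonneg (by positivity) hc.le⟩
  exact strictAntiOn_poissonMean hanti.antitone hbdd (hanti zero_lt_one)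

/-- The non-central χ² CDF series `ξ ↦ e^{-ξ} ∑_{i=0}^∞ (ξ^i/i!) γ(L+i, c)/Γ(L+i)`
is strictly decreasing in the non-centrality parameter `ξ` on `[0, ∞)`. -/
theorem outage_strictAntiOn (L : ℕ) (hL : 1 ≤ L) (c : ℝ) (hc : 0 < c) :
    StrictAntiOn
      (fun ξ : ℝ => Real.exp (-ξ) *
        ∑' i : ℕ, ξ ^ i / (Nat.factorial i) * (lincGamma (L + i) c / Real.Gamma (L + i)))
      (Set.Ici 0) :=
  outage_strictAntiOn_general (Nat.cast_pos.2 hL) hc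
end

section
/- For every a ≥ 0 and s > 0, lim_{x → ∞} Σ_{i=0}^∞ (a^i/i!) · γ(s+i, x)/Γ(s+i) = e^{a}; equivalently, the function x ↦ e^{-a} Σ_{i=0}^∞ (a^i/i!) γ(s+i, x)/Γ(s+i) tends to 1 as x → ∞. -/
/-!
For `s > 0` the map `x ↦ γ(s, x) / Γ(s)` is, on `[0, ∞)`, the CDF of the gamma distribution with
shape `s` and rate `1`. It therefore takes values in `[0, 1]` and tends to `1`. The coefficients
`a ^ i / i!` are absolutely summable and dominate the terms of the series uniformly in `x`, so by
Tannery's theorem the limit may be taken term by term, leaving the exponential series.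
-/

open Filter

open Topology MeasureTheory ProbabilityTheory

theorem gammaPDFReal_eq_mul_rpow_mul_exp {s r t : ℝ} (hr : 0 < r) (ht : 0 ≤ t) :
    gammaPDFReal s r t = r / Real.Gamma s * ((r * t) ^ (s - 1) * Real.exp (-(r * t))) := by
  rw [gammaPDFReal, if_pos ht, Real.mul_rpow hr.le ht, Real.rpow_sub_one hr.ne']
  field_simp

theorem cdf_gammaMeasure_eq_lincGamma_div_Gamma {s r x : ℝ} (hs : 0 < s) (hr : 0 < r)
    (hx : 0 ≤ x) : cdf (gammaMeasure s r) x = lincGamma s (r * x) / Real.Gamma s := by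
  have pdf_eq_zero : ∀ t ∈ Set.Iic x \ Set.Icc 0 x, gammaPDFReal s r t = 0 := fun t ht =>
    if_neg fun h => ht.2 ⟨h, ht.1⟩
  calc cdf (gammaMeasure s r) x
      = ∫ t in Set.Iic x, gammaPDFReal s r t := cdf_gammaMeasure_eq_integral hs hr x
    _ = ∫ t in Set.Icc 0 x, gammaPDFReal s r t :=
      setIntegral_eq_of_subset_of_forall_sdiff_eq_zero measurableSet_Iic Set.Icc_subset_Iic_self
        pdf_eq_zero
    _ = ∫ t in Set.Icc 0 x, r / Real.Gamma s * ((r * t) ^ (s - 1) * Real.exp (-(r * t))) :=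
      setIntegral_congr_fun measurableSet_Icc fun _ ht => gammaPDFReal_eq_mul_rpow_mul_exp hr ht.1
    _ = (r * ∫ t in (0:ℝ)..x, (r * t) ^ (s - 1) * Real.exp (-(r * t))) / Real.Gamma s := by
      rw [integral_const_mul, integral_Icc_eq_integral_Ioc, intervalIntegral.integral_of_le hx]
      ring
    _ = lincGamma s (r * x) / Real.Gamma s := by
      rw [intervalIntegral.mul_integral_comp_mul_left
        (f := fun t => t ^ (s - 1) * Real.exp (-t)), mul_zero, lincGamma]

theorem tendsto_tsum_cdf_smul_atTop {ι E : Type*} [NormedAddCommGroup E] [NormedSpace ℝ E]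
    [CompleteSpace E] (μ : ι → Measure ℝ) {c : ι → E} (hc : Summable fun i => ‖c i‖) :
    Tendsto (fun x => ∑' i, cdf (μ i) x • c i) atTop (𝓝 (∑' i, c i)) := by
  refine tendsto_tsum_of_dominated_convergence hc (fun i => ?_) (.of_forall fun x i => ?_)
  · simpa only [one_smul] using (tendsto_cdf_atTop (μ i)).smul_const (c i)
  · rw [norm_smul, Real.norm_of_nonneg (cdf_nonneg _ x)]
    exact mul_le_of_le_one_left (norm_nonneg _) (cdf_le_one _ x)

theorem tendsto_tsum_lincGamma_div_Gamma_smul_atTop {ι E : Type*} [NormedAddCommGroup E]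
    [NormedSpace ℝ E] [CompleteSpace E] {s : ι → ℝ} (hs : ∀ i, 0 < s i) {c : ι → E}
    (hc : Summable fun i => ‖c i‖) :
    Tendsto (fun x => ∑' i, (lincGamma (s i) x / Real.Gamma (s i)) • c i) atTop
      (𝓝 (∑' i, c i)) := by
  refine (tendsto_tsum_cdf_smul_atTop (fun i => gammaMeasure (s i) 1) hc).congr' ?_
  filter_upwards [eventually_ge_atTop 0] with x hx
  simp only [cdf_gammaMeasure_eq_lincGamma_div_Gamma (hs _) one_pos hx, one_mul]

theorem cdf_series_tendsto_general {𝔸 : Type*} [NormedRing 𝔸] [NormedAlgebra ℝ 𝔸]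
    [CompleteSpace 𝔸] (a : 𝔸) {s : ℝ} (hs : 0 < s) :
    Tendsto
      (fun x : ℝ => ∑' i : ℕ,
        (lincGamma (s + i) x / Real.Gamma (s + i)) • ((Nat.factorial i : ℝ)⁻¹ • a ^ i))
      atTop (𝓝 (NormedSpace.exp a)) := by
  rw [NormedSpace.exp_eq_tsum ℝ]
  exact tendsto_tsum_lincGamma_div_Gamma_smul_atTop (fun i => by positivity)
    (NormedSpace.norm_expSeries_summable' a)

/-- The CDF series tends to one: for `a ≥ 0` and `s > 0`,
`∑_{i=0}^∞ (a^i/i!) γ(s+i, x)/Γ(s+i) → e^a` as `x → ∞`. -/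
theorem cdf_series_tendsto (a s : ℝ) (ha : 0 ≤ a) (hs : 0 < s) :
    Tendsto
      (fun x : ℝ => ∑' i : ℕ, a ^ i / (Nat.factorial i) * (lincGamma (s + i) x / Real.Gamma (s + i)))
      atTop (nhds (Real.exp a)) := by
  simpa only [Real.exp_eq_exp_ℝ, smul_eq_mul, div_eq_inv_mul (a ^ _), mul_comm (_ / _)] using
    cdf_series_tendsto_general a hs
end
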